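/- Structure of local minimizers: fix α>0, β>0 and M ∈ ℝ, let (a,b) be a bounded interval and let v be a local minimizer of JF(α,β,Mx,(a,b),·). Then: (i) if M ≠ 0 and b−a > L₀ := 2(α/(βM²))^{1/3}, then in (a,b) there exists either a jump point of v or a point y ∉ S_v with v(y)=My; (ii) at every jump point x of v one has v(x⁺)−Mx = Mx−v(x⁻), and this common value has the same sign as M when M ≠ 0; (iii) if x₁ < x₂ are two consecutive jump points of v, then v(x) = M(x₁+x₂)/2 for every x ∈ (x₁,x₂). -/

import Mathlib

/-! A local minimizer `v` is compared with `v + pulse p q e`, which adds the jump `e` at `p` and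
removes it at `q`. If the sum of the old and the new value is a constant `m` where they differ, the
fidelity term changes by exactly `β e ∫ t in p..q, (m - 2 f t)`.

Sliding the jump at `x` to a nearby point `y` keeps the number of jumps, so
`y ↦ (v(x⁺) - v(x⁻)) ∫ t in y..x, (v(x⁻) + v(x⁺) - 2 f t)` has a local minimum at `x`: Fermat's
theorem gives the balance of the one-sided limits, and the sign of this function the direction of
the jump. Replacing a plateau `d` on `[p,q)` by the mean `c` of `f` lowers the fidelity term by
`β (q - p) (d - c)²` and creates jumps only at those of `p` and `q` that are not yet jump points.
Between consecutive jumps this costs nothing, so `d = c`; otherwise it costs at most `2α`, which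
bounds the length of a plateau that does not cross the line, since then `|d - c| ≥ |M| (q - p) / 2`.
-/

open MeasureTheory Filter Set

namespace PeronaMalik

/-- `a_{δ,*} = δ⌊a/δ⌋`, the lower `δ`-approximation of `a`. -/
noncomputable def lowGrid (δ a : ℝ) : ℝ := δ * (⌊a / δ⌋ : ℤ)

/-- `b_δ^* = δ⌈b/δ⌉`, the upper `δ`-approximation of `b`. -/
noncomputable def highGrid (δ b : ℝ) : ℝ := δ * (⌈b / δ⌉ : ℤ)

/-- `u` is piecewise constant at scale `δ`: constant on every interval `[zδ, (z+1)δ)`. -/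
def IsPC (δ : ℝ) (u : ℝ → ℝ) : Prop :=
  ∀ z : ℤ, ∀ x ∈ Set.Ico ((z : ℝ) * δ) (((z : ℝ) + 1) * δ), u x = u ((z : ℝ) * δ)

/-- Discrete derivative `D^δ u (x) = (u(x+δ) - u(x))/δ`. -/
noncomputable def Dd (δ : ℝ) (u : ℝ → ℝ) (x : ℝ) : ℝ := (u (x + δ) - u x) / δ

/-- The discrete Perona–Malik functional with fidelity term on `(a,b)`. -/
noncomputable def DPMF (n : ℕ) (β : ℝ) (f : ℝ → ℝ) (a b : ℝ) (u : ℝ → ℝ) : ℝ :=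
  (∫ x in lowGrid (1 / (n : ℝ)) a..(highGrid (1 / (n : ℝ)) b - 1 / (n : ℝ)),
      Real.log (1 + (Dd (1 / (n : ℝ)) u x) ^ 2)) +
    β * ∫ x in a..b, (u x - f x) ^ 2

/-- `u` is a minimizer of `DPMF n β f (0,1)` over `PC_{1/n}(0,1)`. -/
def IsMinimizer (n : ℕ) (β : ℝ) (f : ℝ → ℝ) (u : ℝ → ℝ) : Prop :=
  IsPC (1 / (n : ℝ)) u ∧
    ∀ v : ℝ → ℝ, IsPC (1 / (n : ℝ)) v → DPMF n β f 0 1 u ≤ DPMF n β f 0 1 v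

/-- `m(n,β,f)`, the minimum value of the discrete Perona–Malik functional. -/
noncomputable def mval (n : ℕ) (β : ℝ) (f : ℝ → ℝ) : ℝ :=
  sInf ((fun u => DPMF n β f 0 1 u) '' {u | IsPC (1 / (n : ℝ)) u})

/-- `ω(n) = (log n / n)^{1/3}`. -/
noncomputable def omg (n : ℕ) : ℝ := (Real.log n / n) ^ ((1 : ℝ) / 3)

/-- `δ(n) = 1/(n ω(n))`. -/
noncomputable def dlt (n : ℕ) : ℝ := 1 / ((n : ℝ) * omg n)

/-- The rescaled discrete Perona–Malik functional. -/
noncomputable def RDPM (n : ℕ) (a b : ℝ) (u : ℝ → ℝ) : ℝ :=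
  (1 / omg n ^ 2) *
    ∫ x in lowGrid (dlt n) a..(highGrid (dlt n) b - dlt n),
      Real.log (1 + (Dd (dlt n) u x) ^ 2)

/-- The rescaled discrete Perona–Malik functional with fidelity term. -/
noncomputable def RDPMF (n : ℕ) (β : ℝ) (f : ℝ → ℝ) (a b : ℝ) (u : ℝ → ℝ) : ℝ :=
  RDPM n a b u + β * ∫ x in Set.Ioo a b, (u x - f x) ^ 2

/-- `u` is a step function with finitely many jumps on `(a,b)`. -/
def IsStep (a b : ℝ) (u : ℝ → ℝ) : Prop :=
  ∃ (s : Finset ℝ) (c : ℝ) (J : ℝ → ℝ),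
    (∀ p ∈ s, p ∈ Set.Ioo a b ∧ J p ≠ 0) ∧
    ∀ x ∈ Set.Ioo a b, u x = c + ∑ p ∈ s, (if p ≤ x then J p else 0)

/-- The set of jump (discontinuity) points of `u` inside `(a,b)`. -/
def jumpSet (a b : ℝ) (u : ℝ → ℝ) : Set ℝ :=
  {x ∈ Set.Ioo a b | ¬ ContinuousAt u x}

/-- The limit functional `JF(α,β,f,(a,b),u) = α·#jumps + β∫(u-f)²`. -/
noncomputable def JF (α β : ℝ) (f : ℝ → ℝ) (a b : ℝ) (u : ℝ → ℝ) : ℝ :=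
  α * ((jumpSet a b u).ncard : ℝ) + β * ∫ x in Set.Ioo a b, (u x - f x) ^ 2

/-- Strict convergence in `BV((a,b))`: `L¹` convergence plus convergence of
total variations. -/
def StrictBV (useq : ℕ → ℝ → ℝ) (u : ℝ → ℝ) (a b : ℝ) : Prop :=
  Tendsto (fun k => ∫ x in Set.Ioo a b, |useq k x - u x|) atTop (nhds 0) ∧
  Tendsto (fun k => eVariationOn (useq k) (Set.Ioo a b)) atTop
    (nhds (eVariationOn u (Set.Ioo a b)))

/-- Locally strict convergence in `BV_loc(ℝ)`: strict convergence on every bounded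
interval whose endpoints are not jump points of the limit. -/
def LocStrictBV (useq : ℕ → ℝ → ℝ) (u : ℝ → ℝ) : Prop :=
  ∀ a b : ℝ, a < b → ContinuousAt u a → ContinuousAt u b → StrictBV useq u a b

/-- `S(x) = 2⌊(x+1)/2⌋`. -/
noncomputable def stairS (x : ℝ) : ℝ := 2 * (⌊(x + 1) / 2⌋ : ℤ)

/-- The canonical `(H,V)`-staircase `S_{H,V}(x) = V·S(x/H)`. -/
noncomputable def canStair (H V : ℝ) (x : ℝ) : ℝ := V * stairS (x / H)

/-- Oblique translations of the canonical `(H,V)`-staircase. -/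
def Obl (H V : ℝ) (v : ℝ → ℝ) : Prop :=
  ∃ τ ∈ Set.Icc (-1 : ℝ) 1, ∀ x, v x = canStair H V (x - H * τ) + V * τ

/-- Graph translations of horizontal type of the canonical `(H,V)`-staircase. -/
def Orz (H V : ℝ) (v : ℝ → ℝ) : Prop :=
  ∃ τ ∈ Set.Icc (-1 : ℝ) 1, ∀ x, v x = canStair H V (x - H * τ)

/-- `μ_n(β,L,M)`: minimum of the rescaled functional with affine forcing term. -/
noncomputable def muDisc (n : ℕ) (β L M : ℝ) : ℝ :=
  sInf ((fun u => RDPMF n β (fun x => M * x) 0 L u) '' {u | IsPC (dlt n) u})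

/-- `μ*_n(β,L,M)`: same as `μ_n` but with boundary conditions `u(0)=0`, `u(L^*)=ML`. -/
noncomputable def muDiscStar (n : ℕ) (β L M : ℝ) : ℝ :=
  sInf ((fun u => RDPMF n β (fun x => M * x) 0 L u) ''
    {u | IsPC (dlt n) u ∧ u 0 = 0 ∧ u (highGrid (dlt n) L - dlt n) = M * L})

/-- `μ(α,β,L,M)`: minimum of the limit functional with affine forcing term. -/
noncomputable def muLim (α β L M : ℝ) : ℝ :=
  sInf ((fun u => JF α β (fun x => M * x) 0 L u) '' {u | IsStep 0 L u})

/-- `μ*(α,β,L,M)`: same as `μ` but with boundary values `u(0⁺)=0`, `u(L⁻)=ML`. -/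
noncomputable def muLimStar (α β L M : ℝ) : ℝ :=
  sInf ((fun u => JF α β (fun x => M * x) 0 L u) ''
    {u | IsStep 0 L u ∧ Tendsto u (nhdsWithin 0 (Set.Ioi 0)) (nhds 0) ∧
         Tendsto u (nhdsWithin L (Set.Iio L)) (nhds (M * L))})

/-- `u` and `v` have the same boundary values `u(a⁺)=v(a⁺)`, `u(b⁻)=v(b⁻)`. -/
def SameBdry (a b : ℝ) (u v : ℝ → ℝ) : Prop :=
  (∀ c : ℝ, Tendsto v (nhdsWithin a (Set.Ioi a)) (nhds c) →
     Tendsto u (nhdsWithin a (Set.Ioi a)) (nhds c)) ∧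
  (∀ c : ℝ, Tendsto v (nhdsWithin b (Set.Iio b)) (nhds c) →
     Tendsto u (nhdsWithin b (Set.Iio b)) (nhds c))

/-- `v` is a local minimizer for `JF(α,β,f,(a,b),·)` among step functions with the
same boundary values. -/
def IsLocalMinJF (α β : ℝ) (f : ℝ → ℝ) (a b : ℝ) (v : ℝ → ℝ) : Prop :=
  IsStep a b v ∧
  ∀ u : ℝ → ℝ, IsStep a b u → SameBdry a b u v → JF α β f a b v ≤ JF α β f a b u

/-- `v` is an entire local minimizer for `JF(α,β,f,·,·)`. -/
def IsEntireLocalMinJF (α β : ℝ) (f : ℝ → ℝ) (v : ℝ → ℝ) : Prop :=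
  ∀ a b : ℝ, a < b → IsLocalMinJF α β f a b v

/-- `v` is a local minimizer for `RDPMF_n(β,f,(a,b),·)` among piecewise constant
functions with the same boundary values. -/
def IsLocalMinRDPMF (n : ℕ) (β : ℝ) (f : ℝ → ℝ) (a b : ℝ) (v : ℝ → ℝ) : Prop :=
  IsPC (dlt n) v ∧
  ∀ u : ℝ → ℝ, IsPC (dlt n) u →
    u (lowGrid (dlt n) a) = v (lowGrid (dlt n) a) →
    u (highGrid (dlt n) b - dlt n) = v (highGrid (dlt n) b - dlt n) →
    RDPMF n β f a b v ≤ RDPMF n β f a b u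

open scoped Topology Interval

/-- The jump function with jump `e` at `p`, right continuous like the representatives chosen in
`IsStep`; step functions are the finite sums of these and a constant. -/
noncomputable def jumpAt (p e x : ℝ) : ℝ := if p ≤ x then e else 0

/-- The perturbation adding the jump `e` at `p` and removing it at `q`. It is oriented like the
interval integral: it equals `e` on `[p,q)` if `p ≤ q`, and `-e` on `[q,p)` if `q ≤ p`. -/
noncomputable def pulse (p q e x : ℝ) : ℝ := jumpAt p e x - jumpAt q e x

section Jump

variable {p q e x : ℝ}

lemma jumpAt_of_le (h : p ≤ x) : jumpAt p e x = e := if_pos h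

lemma jumpAt_of_lt (h : x < p) : jumpAt p e x = 0 := if_neg h.not_ge

lemma jumpAt_eventuallyEq_nhdsGE : jumpAt p e =ᶠ[𝓝[≥] x] fun _ => jumpAt p e x := by
  rcases le_or_gt p x with h | h
  · filter_upwards [self_mem_nhdsWithin] with y hy
    rw [jumpAt_of_le h, jumpAt_of_le (h.trans hy)]
  · filter_upwards [nhdsWithin_le_nhds (eventually_lt_nhds h)] with y hy
    rw [jumpAt_of_lt h, jumpAt_of_lt hy]

lemma exists_jumpAt_eventuallyEq_nhdsLT (p e x : ℝ) : ∃ l, jumpAt p e =ᶠ[𝓝[<] x] fun _ => l := by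
  rcases lt_or_ge p x with h | h
  · refine ⟨e, ?_⟩
    filter_upwards [nhdsWithin_le_nhds (eventually_gt_nhds h)] with y hy using jumpAt_of_le hy.le
  · refine ⟨0, ?_⟩
    filter_upwards [self_mem_nhdsWithin] with y hy using jumpAt_of_lt (lt_of_lt_of_le hy h)

lemma continuousAt_jumpAt (h : x ≠ p) : ContinuousAt (jumpAt p e) x := by
  rcases h.lt_or_gt with h | h
  · refine (continuousAt_const (y := (0 : ℝ))).congr ?_
    filter_upwards [eventually_lt_nhds h] with y hy using (jumpAt_of_lt hy).symm
  · refine (continuousAt_const (y := e)).congr ?_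
    filter_upwards [eventually_gt_nhds h] with y hy using (jumpAt_of_le hy.le).symm

lemma continuousAt_pulse (hp : x ≠ p) (hq : x ≠ q) : ContinuousAt (pulse p q e) x :=
  (continuousAt_jumpAt hp).sub (continuousAt_jumpAt hq)

lemma measurable_jumpAt (p e : ℝ) : Measurable (jumpAt p e) :=
  Measurable.ite measurableSet_Ici measurable_const measurable_const

lemma norm_jumpAt_le (p e x : ℝ) : ‖jumpAt p e x‖ ≤ ‖e‖ := by
  unfold jumpAt
  split_ifs <;> simp

lemma jumpAt_add (p e e' x : ℝ) : jumpAt p (e + e') x = jumpAt p e x + jumpAt p e' x := by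
  unfold jumpAt
  split_ifs <;> simp

lemma pulse_eq_add_neg (p q e : ℝ) : pulse p q e = jumpAt p e + jumpAt q (-e) := by
  funext x
  simp only [pulse, Pi.add_apply, jumpAt]
  split_ifs <;> ring

lemma pulse_of_mem_Ico (h : x ∈ Ico p q) : pulse p q e x = e := by
  rw [pulse, jumpAt_of_le h.1, jumpAt_of_lt h.2, sub_zero]

lemma mem_Ico_of_pulse_ne_zero (hpq : p ≤ q) (h : pulse p q e x ≠ 0) : x ∈ Ico p q := by
  by_contra hx
  rw [mem_Ico, not_and_or, not_le, not_lt] at hx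
  refine h ?_
  rcases hx with hx | hx
  · rw [pulse, jumpAt_of_lt hx, jumpAt_of_lt (hx.trans_le hpq), sub_zero]
  · rw [pulse, jumpAt_of_le (hpq.trans hx), jumpAt_of_le hx, sub_self]

lemma setIntegral_jumpAt_mul {a b : ℝ} (hp : p ∈ Ioo a b) (e : ℝ) (g : ℝ → ℝ) :
    ∫ x in Ioo a b, jumpAt p e x * g x = e * ∫ x in p..b, g x := by
  have hind : (fun x => jumpAt p e x * g x) = (Ici p).indicator fun x => e * g x := by
    funext x
    by_cases h : p ≤ x <;> simp [jumpAt, h]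
  have hinter : Ioo a b ∩ Ici p = Ico p b := by
    ext x
    exact ⟨fun h => ⟨h.2, h.1.2⟩, fun h => ⟨⟨hp.1.trans_le h.1, h.2⟩, h.1⟩⟩
  rw [hind, setIntegral_indicator measurableSet_Ici, hinter, integral_Ico_eq_integral_Ioc,
    ← intervalIntegral.integral_of_le hp.2.le, intervalIntegral.integral_const_mul]

end Jump

section StepFunction

variable {a b p e x l : ℝ} {u v : ℝ → ℝ}

lemma isStep_iff : IsStep a b v ↔ ∃ (s : Finset ℝ) (c : ℝ) (J : ℝ → ℝ),
    (∀ p ∈ s, p ∈ Ioo a b) ∧ EqOn v (fun x => c + ∑ p ∈ s, jumpAt p (J p) x) (Ioo a b) := by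
  refine ⟨fun ⟨s, c, J, hs, hv⟩ => ⟨s, c, J, fun p hp => (hs p hp).1, hv⟩,
    fun ⟨s, c, J, hs, hv⟩ => ⟨s.filter fun p => J p ≠ 0, c, J, fun p hp => ?_, fun x hx => ?_⟩⟩
  · obtain ⟨hps, hJ⟩ := Finset.mem_filter.mp hp
    exact ⟨hs p hps, hJ⟩
  · rw [hv hx, Finset.sum_filter_of_ne]
    · rfl
    · rintro p - hne hJ
      exact hne (by rw [hJ, ite_self])

lemma isStep_jumpAt (hp : p ∈ Ioo a b) (e : ℝ) : IsStep a b (jumpAt p e) :=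
  isStep_iff.mpr ⟨{p}, 0, fun _ => e, by simpa using hp, fun x _ => by simp⟩

lemma IsStep.add (hu : IsStep a b u) (hv : IsStep a b v) : IsStep a b (u + v) := by
  obtain ⟨s, c, J, hs, hu⟩ := isStep_iff.mp hu
  obtain ⟨t, d, K, ht, hv⟩ := isStep_iff.mp hv
  have hite : ∀ (r : Finset ℝ) (L : ℝ → ℝ) (p x : ℝ),
      jumpAt p (if p ∈ r then L p else 0) x = if p ∈ r then jumpAt p (L p) x else 0 := by
    intro r L p x
    split_ifs
    · rfl
    · simp [jumpAt]
  refine isStep_iff.mpr ⟨s ∪ t, c + d,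
    fun p => (if p ∈ s then J p else 0) + (if p ∈ t then K p else 0), fun p hp => ?_,
    fun x hx => ?_⟩
  · exact (Finset.mem_union.mp hp).elim (hs p) (ht p)
  · rw [Pi.add_apply, hu hx, hv hx]
    simp only [jumpAt_add, hite, Finset.sum_add_distrib, Finset.sum_ite_mem,
      Finset.union_inter_cancel_left, Finset.union_inter_cancel_right]
    ring

lemma isStep_pulse {q : ℝ} (hp : p ∈ Ioo a b) (hq : q ∈ Ioo a b) (e : ℝ) :
    IsStep a b (pulse p q e) :=
  pulse_eq_add_neg p q e ▸ (isStep_jumpAt hp e).add (isStep_jumpAt hq (-e))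

lemma IsStep.eventuallyEq_nhdsGE (hv : IsStep a b v) (hx : x ∈ Ioo a b) :
    v =ᶠ[𝓝[≥] x] fun _ => v x := by
  obtain ⟨s, c, J, -, hv⟩ := isStep_iff.mp hv
  have hs : ∀ᶠ y in 𝓝[≥] x, ∀ p ∈ s, jumpAt p (J p) y = jumpAt p (J p) x :=
    (Filter.eventually_all_finset s).mpr fun p _ => jumpAt_eventuallyEq_nhdsGE
  filter_upwards [hs, nhdsWithin_le_nhds (Ioo_mem_nhds hx.1 hx.2)] with y hy hyab
  rw [hv hyab, hv hx]
  exact congrArg (c + ·) (Finset.sum_congr rfl hy)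

lemma IsStep.exists_eventuallyEq_nhdsLT (hv : IsStep a b v) (hx : x ∈ Ioo a b) :
    ∃ l, v =ᶠ[𝓝[<] x] fun _ => l := by
  obtain ⟨s, c, J, -, hv⟩ := isStep_iff.mp hv
  choose l hl using fun p => exists_jumpAt_eventuallyEq_nhdsLT p (J p) x
  have hs : ∀ᶠ y in 𝓝[<] x, ∀ p ∈ s, jumpAt p (J p) y = l p :=
    (Filter.eventually_all_finset s).mpr fun p _ => hl p
  refine ⟨c + ∑ p ∈ s, l p, ?_⟩
  filter_upwards [hs, nhdsWithin_le_nhds (Ioo_mem_nhds hx.1 hx.2)] with y hy hyab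
  rw [hv hyab]
  exact congrArg (c + ·) (Finset.sum_congr rfl hy)

lemma IsStep.finite_jumpSet (hv : IsStep a b v) : (jumpSet a b v).Finite := by
  obtain ⟨s, c, J, -, hv⟩ := isStep_iff.mp hv
  refine s.finite_toSet.subset fun x hx => by_contra fun hxs => hx.2 ?_
  have hsum : ContinuousAt (fun y => c + ∑ p ∈ s, jumpAt p (J p) y) x :=
    continuousAt_const.add <| tendsto_finsetSum s fun p hp =>
      continuousAt_jumpAt fun h => hxs (h ▸ hp)
  exact hsum.congr (hv.eventuallyEq_of_mem (Ioo_mem_nhds hx.1.1 hx.1.2)).symm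

lemma IsStep.memLp (hv : IsStep a b v) (r : ENNReal) :
    MemLp v r (volume.restrict (Ioo a b)) := by
  obtain ⟨s, c, J, -, hv⟩ := isStep_iff.mp hv
  have hsum : MemLp (fun x => c + ∑ p ∈ s, jumpAt p (J p) x) r (volume.restrict (Ioo a b)) :=
    (memLp_const c).add <| memLp_finsetSum s fun p _ =>
      MemLp.of_bound (measurable_jumpAt p (J p)).aestronglyMeasurable ‖J p‖
        (Eventually.of_forall (norm_jumpAt_le p (J p)))
  exact hsum.ae_eq (hv.symm.aeEq_restrict measurableSet_Ioo)

lemma IsStep.continuousAt_sub_jumpAt (hv : IsStep a b v) (hx : x ∈ Ioo a b)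
    (hl : v =ᶠ[𝓝[<] x] fun _ => l) : ContinuousAt (v - jumpAt x (v x - l)) x := by
  refine (continuousAt_const (y := l)).congr ?_
  rw [EventuallyEq, ← nhdsLT_sup_nhdsGE, eventually_sup]
  constructor
  · filter_upwards [hl, self_mem_nhdsWithin] with y hy hyx
    rw [Pi.sub_apply, jumpAt_of_lt hyx, hy, sub_zero]
  · filter_upwards [hv.eventuallyEq_nhdsGE hx, self_mem_nhdsWithin] with y hy hxy
    rw [Pi.sub_apply, jumpAt_of_le hxy, hy, sub_sub_cancel]

lemma IsStep.ne_of_mem_jumpSet (hv : IsStep a b v) (hx : x ∈ jumpSet a b v)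
    (hl : v =ᶠ[𝓝[<] x] fun _ => l) : v x ≠ l := by
  intro h
  have hzero : jumpAt x (v x - l) = 0 := by
    funext y
    simp [jumpAt, h]
  have hc := hv.continuousAt_sub_jumpAt hx.1 hl
  rw [hzero, sub_zero] at hc
  exact hx.2 hc

lemma IsStep.eq_of_forall_continuousAt {q : ℝ} (hv : IsStep a b v) (hp : p ∈ Ioo a b)
    (hq : q ≤ b) (hc : ∀ t ∈ Ioo p q, ContinuousAt v t) : ∀ t ∈ Ico p q, v t = v p := by
  intro t ht
  have hmem : ∀ y ∈ Icc p t, y ∈ Ioo a b := fun y hy =>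
    ⟨hp.1.trans_le hy.1, hy.2.trans_lt (ht.2.trans_le hq)⟩
  have hcont : ContinuousOn v (Icc p t) := by
    intro y hy
    rcases hy.1.eq_or_lt with rfl | hpy
    · exact (continuousWithinAt_const.congr_of_eventuallyEq
        (hv.eventuallyEq_nhdsGE hp) rfl).mono Icc_subset_Ici_self
    · exact (hc y ⟨hpy, hy.2.trans_lt ht.2⟩).continuousWithinAt
  have hderiv : ∀ y ∈ Ico p t, HasDerivWithinAt v 0 (Ici y) y := fun y hy =>
    (hasDerivWithinAt_const y (Ici y) (v y)).congr_of_eventuallyEq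
      (hv.eventuallyEq_nhdsGE (hmem y ⟨hy.1, hy.2.le⟩)) rfl
  exact constant_of_has_deriv_right_zero hcont hderiv t ⟨ht.1, le_rfl⟩

end StepFunction

section Perturbation

variable {a b p q e m x y l : ℝ} {f g v : ℝ → ℝ}

lemma sameBdry_add_pulse (hp : p ∈ Ioo a b) (hq : q ∈ Ioo a b) :
    SameBdry a b (v + pulse p q e) v := by
  refine ⟨fun c hc => hc.congr' ?_, fun c hc => hc.congr' ?_⟩
  · filter_upwards [nhdsWithin_le_nhds (eventually_lt_nhds hp.1),
      nhdsWithin_le_nhds (eventually_lt_nhds hq.1)] with y hyp hyq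
    rw [Pi.add_apply, pulse, jumpAt_of_lt hyp, jumpAt_of_lt hyq, sub_self, add_zero]
  · filter_upwards [nhdsWithin_le_nhds (eventually_gt_nhds hp.2),
      nhdsWithin_le_nhds (eventually_gt_nhds hq.2)] with y hyp hyq
    rw [Pi.add_apply, pulse, jumpAt_of_le hyp.le, jumpAt_of_le hyq.le, sub_self, add_zero]

lemma jumpSet_add_pulse_subset :
    jumpSet a b (v + pulse p q e) ⊆ jumpSet a b v ∪ {p, q} := by
  intro z hz
  by_contra h
  simp only [mem_union, mem_insert_iff, mem_singleton_iff, not_or] at h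
  obtain ⟨hzv, hzp, hzq⟩ := h
  have hc : ContinuousAt v z := by_contra fun hc => hzv ⟨hz.1, hc⟩
  exact hz.2 (hc.add (continuousAt_pulse hzp hzq))

lemma ncard_jumpSet_add_pulse_le (hv : IsStep a b v) :
    (jumpSet a b (v + pulse p q e)).ncard
      ≤ (jumpSet a b v).ncard + ({p, q} \ jumpSet a b v).ncard := by
  refine (ncard_le_ncard ?_ (hv.finite_jumpSet.union (toFinite _).sdiff)).trans
    (ncard_union_le _ _)
  rw [union_sdiff_self]
  exact jumpSet_add_pulse_subset

lemma ncard_jumpSet_slide_le (hv : IsStep a b v) (hx : x ∈ jumpSet a b v)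
    (hl : v =ᶠ[𝓝[<] x] fun _ => l) :
    (jumpSet a b (v + pulse y x (v x - l))).ncard ≤ (jumpSet a b v).ncard := by
  have hsub : jumpSet a b (v + pulse y x (v x - l)) ⊆ insert y (jumpSet a b v \ {x}) := by
    intro z hz
    refine or_iff_not_imp_left.mpr fun hzy => ?_
    have hzx : z ≠ x := by
      rintro rfl
      refine hz.2 ?_
      have hsplit : v + pulse y z (v z - l) = v - jumpAt z (v z - l) + jumpAt y (v z - l) := by
        funext t
        simp only [Pi.add_apply, Pi.sub_apply, pulse]
        ring
      rw [hsplit]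
      exact (hv.continuousAt_sub_jumpAt hz.1 hl).add (continuousAt_jumpAt hzy)
    refine ⟨(jumpSet_add_pulse_subset hz).resolve_right ?_, hzx⟩
    rintro (h | h)
    exacts [hzy h, hzx h]
  calc (jumpSet a b (v + pulse y x (v x - l))).ncard
      ≤ (insert y (jumpSet a b v \ {x})).ncard :=
        ncard_le_ncard hsub (hv.finite_jumpSet.sdiff.insert y)
    _ ≤ (jumpSet a b v \ {x}).ncard + 1 := ncard_insert_le _ _
    _ = (jumpSet a b v).ncard := ncard_sdiff_singleton_add_one hx hv.finite_jumpSet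

lemma integrableOn_jumpAt_mul (hg : IntegrableOn g (Ioo a b)) :
    IntegrableOn (fun x => jumpAt p e x * g x) (Ioo a b) :=
  hg.bdd_mul (measurable_jumpAt p e).aestronglyMeasurable
    (Eventually.of_forall (norm_jumpAt_le p e))

lemma integrableOn_pulse_mul (hg : IntegrableOn g (Ioo a b)) :
    IntegrableOn (fun x => pulse p q e x * g x) (Ioo a b) := by
  simp only [pulse, sub_mul]
  exact (integrableOn_jumpAt_mul hg).sub (integrableOn_jumpAt_mul hg)

lemma setIntegral_pulse_mul (hp : p ∈ Ioo a b) (hq : q ∈ Ioo a b)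
    (hg : IntegrableOn g (Ioo a b)) :
    ∫ x in Ioo a b, pulse p q e x * g x = e * ∫ x in p..q, g x := by
  have hab : a ≤ b := (hp.1.trans hp.2).le
  have hgab : IntervalIntegrable g volume a b :=
    (intervalIntegrable_iff_integrableOn_Ioo_of_le hab).mpr hg
  have hp' : p ∈ [[a, b]] := Icc_subset_uIcc (Ioo_subset_Icc_self hp)
  have hq' : q ∈ [[a, b]] := Icc_subset_uIcc (Ioo_subset_Icc_self hq)
  have hsplit := intervalIntegral.integral_add_adjacent_intervals
    (hgab.mono_set (uIcc_subset_uIcc hp' hq'))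
    (hgab.mono_set (uIcc_subset_uIcc_right hq'))
  simp only [pulse, sub_mul]
  rw [integral_sub (integrableOn_jumpAt_mul hg) (integrableOn_jumpAt_mul hg),
    setIntegral_jumpAt_mul hp, setIntegral_jumpAt_mul hq, ← hsplit]
  ring

lemma setIntegral_sq_add_pulse_sub (hf : MemLp f 2 (volume.restrict (Ioo a b)))
    (hv : MemLp v 2 (volume.restrict (Ioo a b))) (hp : p ∈ Ioo a b) (hq : q ∈ Ioo a b)
    (hm : ∀ t, pulse p q e t ≠ 0 → v t + (v t + pulse p q e t) = m) :
    ∫ t in Ioo a b, ((v + pulse p q e) t - f t) ^ 2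
      = (∫ t in Ioo a b, (v t - f t) ^ 2) + e * ∫ t in p..q, (m - 2 * f t) := by
  have hexpand : ∀ t, ((v + pulse p q e) t - f t) ^ 2
      = (v t - f t) ^ 2 + pulse p q e t * (m - 2 * f t) := by
    intro t
    rw [Pi.add_apply]
    by_cases h : pulse p q e t = 0
    · rw [h]; ring
    · rw [← hm t h]; ring
  have hg : IntegrableOn (fun t => m - 2 * f t) (Ioo a b) :=
    (integrable_const m).sub ((hf.integrable one_le_two).const_mul 2)
  simp_rw [hexpand]
  have hsq : IntegrableOn (fun t => (v t - f t) ^ 2) (Ioo a b) := (hv.sub hf).integrable_sq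
  rw [integral_add hsq (integrableOn_pulse_mul hg), setIntegral_pulse_mul hp hq hg]

end Perturbation

section LocalMinimizer

variable {α β a b p q x l d : ℝ} {f v : ℝ → ℝ}

lemma IsLocalMinJF.le_add_pulse {e m : ℝ} (hv : IsLocalMinJF α β f a b v)
    (hf : MemLp f 2 (volume.restrict (Ioo a b))) (hp : p ∈ Ioo a b) (hq : q ∈ Ioo a b)
    (hm : ∀ t, pulse p q e t ≠ 0 → v t + (v t + pulse p q e t) = m) :
    α * (jumpSet a b v).ncard ≤ α * (jumpSet a b (v + pulse p q e)).ncard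
      + β * (e * ∫ t in p..q, (m - 2 * f t)) := by
  have h := hv.2 _ (hv.1.add (isStep_pulse hp hq e)) (sameBdry_add_pulse hp hq)
  rw [JF, JF, setIntegral_sq_add_pulse_sub hf (hv.1.memLp 2) hp hq hm] at h
  linarith

lemma IsLocalMinJF.isLocalMin_slide (hα : 0 ≤ α) (hβ : 0 < β) (hv : IsLocalMinJF α β f a b v)
    (hf : MemLp f 2 (volume.restrict (Ioo a b))) (hx : x ∈ jumpSet a b v)
    (hl : v =ᶠ[𝓝[<] x] fun _ => l) :
    IsLocalMin (fun y => (v x - l) * ∫ t in y..x, (l + v x - 2 * f t)) x := by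
  have hsides : ∀ᶠ t in 𝓝 x, (t < x → v t = l) ∧ (x ≤ t → v t = v x) :=
    (eventually_nhdsWithin_iff.mp hl).and
      (eventually_nhdsWithin_iff.mp (hv.1.eventuallyEq_nhdsGE hx.1))
  obtain ⟨r, s, hrs, hsides⟩ := mem_nhds_iff_exists_Ioo_subset.mp hsides
  filter_upwards [Ioo_mem_nhds hrs.1 hrs.2, Ioo_mem_nhds hx.1.1 hx.1.2] with y hy hyab
  have hm : ∀ t, pulse y x (v x - l) t ≠ 0 →
      v t + (v t + pulse y x (v x - l) t) = l + v x := by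
    intro t ht
    rcases lt_or_ge t x with htx | hxt
    · have hyt : y ≤ t := not_lt.mp fun h =>
        ht (by rw [pulse, jumpAt_of_lt h, jumpAt_of_lt htx, sub_zero])
      rw [pulse, jumpAt_of_le hyt, jumpAt_of_lt htx,
        (hsides ⟨hy.1.trans_le hyt, htx.trans hrs.2⟩).1 htx]
      ring
    · have hty : t < y := not_le.mp fun h =>
        ht (by rw [pulse, jumpAt_of_le h, jumpAt_of_le hxt, sub_self])
      rw [pulse, jumpAt_of_lt hty, jumpAt_of_le hxt,
        (hsides ⟨hrs.1.trans_le hxt, hty.trans hy.2⟩).2 hxt]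
      ring
  have hcount : (α * (jumpSet a b (v + pulse y x (v x - l))).ncard : ℝ)
      ≤ α * (jumpSet a b v).ncard :=
    mul_le_mul_of_nonneg_left (mod_cast ncard_jumpSet_slide_le hv.1 hx hl) hα
  have hmin := hv.le_add_pulse hf hyab hx.1 hm
  rw [intervalIntegral.integral_same, mul_zero]
  exact nonneg_of_mul_nonneg_right (by linarith) hβ

lemma IsLocalMinJF.left_add_right_eq (hα : 0 ≤ α) (hβ : 0 < β) (hv : IsLocalMinJF α β f a b v)
    (hf : MemLp f 2 (volume.restrict (Ioo a b))) (hfx : ContinuousAt f x)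
    (hx : x ∈ jumpSet a b v) (hl : v =ᶠ[𝓝[<] x] fun _ => l) : l + v x = 2 * f x := by
  have hmeas : StronglyMeasurableAtFilter (fun t => l + v x - 2 * f t) (𝓝 x) :=
    ⟨Ioo a b, Ioo_mem_nhds hx.1.1 hx.1.2,
      aestronglyMeasurable_const.sub (hf.aestronglyMeasurable.const_mul 2)⟩
  have hderiv := (intervalIntegral.integral_hasDerivAt_left IntervalIntegrable.refl hmeas
    (continuousAt_const.sub (hfx.const_mul 2))).const_mul (v x - l)
  have hzero := (hv.isLocalMin_slide hα hβ hf hx hl).hasDerivAt_eq_zero hderiv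
  have hne : v x - l ≠ 0 := sub_ne_zero.mpr (hv.1.ne_of_mem_jumpSet hx hl)
  linarith [neg_eq_zero.mp ((mul_eq_zero.mp hzero).resolve_left hne)]

lemma IsLocalMinJF.mul_sq_sub_average_le (hα : 0 ≤ α) (hv : IsLocalMinJF α β f a b v)
    (hf : MemLp f 2 (volume.restrict (Ioo a b))) (hp : p ∈ Ioo a b) (hq : q ∈ Ioo a b)
    (hpq : p < q) (hd : ∀ t ∈ Ico p q, v t = d) :
    β * ((q - p) * (d - ⨍ t in p..q, f t) ^ 2) ≤ α * ({p, q} \ jumpSet a b v).ncard := by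
  set c := ⨍ t in p..q, f t with hc
  have hm : ∀ t, pulse p q (c - d) t ≠ 0 → v t + (v t + pulse p q (c - d) t) = c + d := by
    intro t ht
    have htpq := mem_Ico_of_pulse_ne_zero hpq.le ht
    rw [hd t htpq, pulse_of_mem_Ico htpq]
    ring
  have hfint : IntervalIntegrable f volume p q :=
    (intervalIntegrable_iff_integrableOn_Icc_of_le hpq.le).mpr
      (IntegrableOn.mono_set (hf.integrable one_le_two) (Icc_subset_Ioo hp.1 hq.2))
  have hint : ∫ t in p..q, f t = (q - p) * c := by
    rw [hc, interval_average_eq_div, mul_div_cancel₀ _ (sub_ne_zero.mpr hpq.ne')]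
  have hgain : (c - d) * ∫ t in p..q, (c + d - 2 * f t) = -((q - p) * (d - c) ^ 2) := by
    rw [intervalIntegral.integral_sub intervalIntegrable_const (hfint.const_mul 2),
      intervalIntegral.integral_const, intervalIntegral.integral_const_mul, hint, smul_eq_mul]
    ring
  have hcount : (α * (jumpSet a b (v + pulse p q (c - d))).ncard : ℝ)
      ≤ α * ((jumpSet a b v).ncard + ({p, q} \ jumpSet a b v).ncard) := by
    gcongr
    exact_mod_cast ncard_jumpSet_add_pulse_le hv.1
  have hmin := hv.le_add_pulse hf hp hq hm
  rw [hgain] at hmin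
  linarith

lemma IsLocalMinJF.eq_average_of_consecutive_jumps (hα : 0 ≤ α) (hβ : 0 < β)
    (hv : IsLocalMinJF α β f a b v) (hf : MemLp f 2 (volume.restrict (Ioo a b)))
    (hp : p ∈ jumpSet a b v) (hq : q ∈ jumpSet a b v) (hpq : p < q)
    (hc : ∀ t ∈ Ioo p q, ContinuousAt v t) : ∀ t ∈ Ico p q, v t = ⨍ t in p..q, f t := by
  have hconst := hv.1.eq_of_forall_continuousAt hp.1 hq.1.2.le hc
  have hbound := hv.mul_sq_sub_average_le hα hf hp.1 hq.1 hpq hconst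
  rw [sdiff_eq_empty.mpr (pair_subset hp hq), ncard_empty, Nat.cast_zero, mul_zero, ← mul_assoc]
    at hbound
  have hsq : (v p - ⨍ t in p..q, f t) ^ 2 ≤ 0 :=
    nonpos_of_mul_nonpos_right hbound (mul_pos hβ (sub_pos.mpr hpq))
  intro t ht
  rw [hconst t ht]
  exact sub_eq_zero.mp (pow_eq_zero_iff two_ne_zero |>.mp (le_antisymm hsq (sq_nonneg _)))

end LocalMinimizer

section Linear

variable {α β M a b p q x l : ℝ} {v : ℝ → ℝ}

lemma memLp_two_const_mul_id (M a b : ℝ) :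
    MemLp (fun x => M * x) 2 (volume.restrict (Ioo a b)) :=
  (memLp_two_iff_integrable_sq (by fun_prop)).mpr
    ((Continuous.integrableOn_Icc (by fun_prop)).mono_set Ioo_subset_Icc_self)

lemma average_const_mul_id (hpq : p ≠ q) : ⨍ t in p..q, M * t = M * (p + q) / 2 := by
  have hne : q - p ≠ 0 := sub_ne_zero.mpr hpq.symm
  rw [interval_average_eq_div, intervalIntegral.integral_const_mul, integral_id]
  field_simp
  ring

lemma IsLocalMinJF.jump_mul_slope_pos (hα : 0 ≤ α) (hβ : 0 < β)
    (hv : IsLocalMinJF α β (fun x => M * x) a b v) (hM : M ≠ 0) (hx : x ∈ jumpSet a b v)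
    (hl : v =ᶠ[𝓝[<] x] fun _ => l) : 0 < (v x - l) * M := by
  have hf := memLp_two_const_mul_id M a b
  have hbal : l + v x = 2 * (M * x) := hv.left_add_right_eq hα hβ hf (by fun_prop) hx hl
  have hint : ∀ y, ∫ t in y..x, (l + v x - 2 * (M * t)) = M * (x - y) ^ 2 := by
    intro y
    rw [intervalIntegral.integral_sub intervalIntegrable_const
      (Continuous.intervalIntegrable (by fun_prop) _ _), intervalIntegral.integral_const,
      intervalIntegral.integral_const_mul, intervalIntegral.integral_const_mul, integral_id, hbal,
      smul_eq_mul]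
    ring
  have hmin : ∀ᶠ y in 𝓝 x, 0 ≤ (v x - l) * M * (x - y) ^ 2 := by
    filter_upwards [hv.isLocalMin_slide hα hβ hf hx hl] with y hy
    rw [hint, hint, sub_self] at hy
    linarith
  obtain ⟨y, hy, hyx⟩ := ((hmin.filter_mono nhdsWithin_le_nhds).and
    (self_mem_nhdsWithin : ∀ᶠ y in 𝓝[>] x, x < y)).exists
  have hne : (v x - l) * M ≠ 0 :=
    mul_ne_zero (sub_ne_zero.mpr (hv.1.ne_of_mem_jumpSet hx hl)) hM
  exact (nonneg_of_mul_nonneg_left hy (sq_pos_of_ne_zero (sub_ne_zero.mpr hyx.ne))).lt_of_ne'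
    hne

lemma le_mul_rpow_one_div {C K L : ℝ} {n : ℕ} (hn : n ≠ 0) (hC : 0 ≤ C) (hK : 0 ≤ K)
    (h : L ^ n ≤ C ^ n * K) : L ≤ C * K ^ ((1 : ℝ) / n) := by
  refine le_of_pow_le_pow_left₀ hn (by positivity) ?_
  rwa [mul_pow, one_div, Real.rpow_inv_natCast_pow hK hn]

lemma mul_half_sq_le_sq_of_no_crossing {d : ℝ} (hpq : p ≤ q)
    (h : ∀ y ∈ Ico p q, d ≠ M * y) : M ^ 2 * ((q - p) / 2) ^ 2 ≤ (d - M * (p + q) / 2) ^ 2 := by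
  rcases eq_or_ne M 0 with rfl | hM
  · simpa using sq_nonneg d
  have hd : d / M ∉ Ico p q := fun hd => h _ hd (by field_simp)
  have hdist : (q - p) / 2 ≤ |d / M - (p + q) / 2| := by
    rw [mem_Ico, not_and_or, not_le, not_lt] at hd
    rw [le_abs]
    rcases hd with hd | hd
    · right; linarith
    · left; linarith
  calc M ^ 2 * ((q - p) / 2) ^ 2 ≤ M ^ 2 * |d / M - (p + q) / 2| ^ 2 := by gcongr
    _ = (d - M * (p + q) / 2) ^ 2 := by rw [sq_abs, ← mul_pow]; congr 1; field_simp

lemma IsLocalMinJF.sub_le_of_no_crossing (hα : 0 ≤ α) (hβ : 0 < β)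
    (hv : IsLocalMinJF α β (fun x => M * x) a b v) (hM : M ≠ 0) (hp : p ∈ Ioo a b)
    (hq : q ∈ Ioo a b) (hpq : p < q) (hc : ∀ t ∈ Ioo p q, ContinuousAt v t)
    (hcross : ∀ y ∈ Ico p q, v y ≠ M * y) : q - p ≤ 2 * (α / (β * M ^ 2)) ^ ((1 : ℝ) / 3) := by
  have hconst := hv.1.eq_of_forall_continuousAt hp hq.2.le hc
  have hbound := hv.mul_sq_sub_average_le hα (memLp_two_const_mul_id M a b) hp hq hpq hconst
  rw [average_const_mul_id hpq.ne] at hbound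
  have hcount : (({p, q} \ jumpSet a b v).ncard : ℝ) ≤ 2 := by
    exact_mod_cast (ncard_le_ncard sdiff_subset (toFinite _)).trans (ncard_pair hpq.ne).le
  have hdist : M ^ 2 * ((q - p) / 2) ^ 2 ≤ (v p - M * (p + q) / 2) ^ 2 :=
    mul_half_sq_le_sq_of_no_crossing hpq.le fun y hy => hconst y hy ▸ hcross y hy
  refine mod_cast le_mul_rpow_one_div three_ne_zero zero_le_two (by positivity) ?_
  rw [← mul_div_assoc, le_div_iff₀ (by positivity)]
  calc (q - p) ^ 3 * (β * M ^ 2)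
      = 4 * (β * ((q - p) * (M ^ 2 * ((q - p) / 2) ^ 2))) := by ring
    _ ≤ 4 * (β * ((q - p) * (v p - M * (p + q) / 2) ^ 2)) := by gcongr
    _ ≤ 4 * (α * 2) := by
        linarith [hbound.trans (mul_le_mul_of_nonneg_left hcount hα)]
    _ = 2 ^ 3 * α := by ring

lemma IsLocalMinJF.exists_jump_or_crossing (hα : 0 ≤ α) (hβ : 0 < β)
    (hv : IsLocalMinJF α β (fun x => M * x) a b v) (hM : M ≠ 0)
    (hL : 2 * (α / (β * M ^ 2)) ^ ((1 : ℝ) / 3) < b - a) :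
    (∃ x ∈ Ioo a b, ¬ ContinuousAt v x) ∨ ∃ y ∈ Ioo a b, ContinuousAt v y ∧ v y = M * y := by
  by_contra! h
  obtain ⟨hc, hcross⟩ := h
  obtain ⟨r, hLr, hrb⟩ := exists_between hL
  have hr : 0 < r := lt_of_le_of_lt (by positivity) hLr
  have hp : (a + b - r) / 2 ∈ Ioo a b := ⟨by linarith, by linarith⟩
  have hq : (a + b + r) / 2 ∈ Ioo a b := ⟨by linarith, by linarith⟩
  have hsub : Ico ((a + b - r) / 2) ((a + b + r) / 2) ⊆ Ioo a b := fun y hy =>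
    ⟨hp.1.trans_le hy.1, hy.2.trans hq.2⟩
  have hle := hv.sub_le_of_no_crossing hα hβ hM hp hq (by linarith)
    (fun t ht => hc t (hsub (Ioo_subset_Ico_self ht)))
    fun y hy => hcross y (hsub hy) (hc y (hsub hy))
  linarith

end Linear

/-- Structure of local minimizers `v` of `JF(α,β,Mx,(a,b),·)`:
(i) if `M ≠ 0` and `b − a > L₀ = 2(α/(βM²))^{1/3}` then `(a,b)` contains a jump point
of `v` or an intersection of `v` with the line `Mx`; (ii) at every jump point `x` one has
`v(x⁺) − Mx = Mx − v(x⁻)`, with the same sign as `M` when `M ≠ 0`; (iii) between two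
consecutive jump points `x₁ < x₂` the function equals `M(x₁+x₂)/2`. -/
theorem local_minimizers_structure
    (α β M : ℝ) (hα : 0 < α) (hβ : 0 < β)
    (a b : ℝ) (hab : a < b) (v : ℝ → ℝ)
    (hv : IsLocalMinJF α β (fun x => M * x) a b v) :
    (M ≠ 0 → 2 * (α / (β * M ^ 2)) ^ ((1 : ℝ) / 3) < b - a →
      (∃ x ∈ Set.Ioo a b, ¬ ContinuousAt v x) ∨
      (∃ y ∈ Set.Ioo a b, ContinuousAt v y ∧ v y = M * y)) ∧
    (∀ x ∈ Set.Ioo a b, ¬ ContinuousAt v x →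
      ∃ vl vr : ℝ,
        Tendsto v (nhdsWithin x (Set.Iio x)) (nhds vl) ∧
        Tendsto v (nhdsWithin x (Set.Ioi x)) (nhds vr) ∧
        vr - M * x = M * x - vl ∧
        (M ≠ 0 → 0 < (vr - M * x) * M)) ∧
    (∀ x₁ x₂ : ℝ, x₁ ∈ Set.Ioo a b → x₂ ∈ Set.Ioo a b → x₁ < x₂ →
      ¬ ContinuousAt v x₁ → ¬ ContinuousAt v x₂ →
      (∀ x ∈ Set.Ioo x₁ x₂, ContinuousAt v x) →
      ∀ x ∈ Set.Ioo x₁ x₂, v x = M * (x₁ + x₂) / 2) := by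
  have hf := memLp_two_const_mul_id M a b
  refine ⟨fun hM hL => hv.exists_jump_or_crossing hα.le hβ hM hL, fun x hx hc => ?_,
    fun x₁ x₂ h₁ h₂ h₁₂ hd₁ hd₂ hc x hx => ?_⟩
  · have hjump : x ∈ jumpSet a b v := ⟨hx, hc⟩
    obtain ⟨l, hl⟩ := hv.1.exists_eventuallyEq_nhdsLT hx
    have hr : v =ᶠ[𝓝[>] x] fun _ => v x :=
      (hv.1.eventuallyEq_nhdsGE hx).filter_mono (nhdsWithin_mono x Ioi_subset_Ici_self)
    have hbal : l + v x = 2 * (M * x) :=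
      hv.left_add_right_eq hα.le hβ hf (by fun_prop) hjump hl
    refine ⟨l, v x, tendsto_const_nhds.congr' hl.symm, tendsto_const_nhds.congr' hr.symm,
      by linarith, fun hM => ?_⟩
    have hsign := hv.jump_mul_slope_pos hα.le hβ hM hjump hl
    rw [show v x - l = 2 * (v x - M * x) by linarith] at hsign
    linarith
  · rw [← average_const_mul_id h₁₂.ne]
    exact hv.eq_average_of_consecutive_jumps hα.le hβ hf ⟨h₁, hd₁⟩ ⟨h₂, hd₂⟩ h₁₂ hc x
      (Ioo_subset_Ico_self hx)

end PeronaMalik
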